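/- arXiv:2312.17126 — 5 statements merged into one kernel-verified Lean document; each statement's English description precedes it below -/
import Mathlib

section
/- Let d = 2k+2 with k odd, and let Γ^0, …, Γ^{2k+1} be complex n × n matrices satisfying the Lorentz Clifford relations and the chiral reality pattern. Then M := Γ^2 Γ^4 ⋯ Γ^{2k} is invertible, M conj(Γ^μ) M^{−1} = −Γ^μ for every μ = 0, 1, …, 2k+1, and M · conj(M) = (−1)^{k(k−1)/2} I. (This M is the charge-conjugation matrix M_C, and M·conj(M) computes C^2 on a Dirac fermion.) -/
/-!
Moving a matrix past `M = Γ^2 Γ^4 ⋯ Γ^{2k}` costs one sign for each factor it anticommutes with.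
If `μ` is `0` or odd, all `k` factors anticommute with `Γ^μ`, which is real, so the sign is
`(-1)^k = -1`. If `μ ≥ 2` is even, one factor is `Γ^μ` itself, so the sign is `(-1)^(k-1) = 1`,
and `conj(Γ^μ) = -Γ^μ` supplies the missing minus sign. These two counts are
`ofFn_prod_mul_of_anticomm` and `ofFn_prod_mul_self_factor`.

Each factor of `M` is imaginary, so `conj(M) = (-1)^k M`; since each factor squares to `-1`,
reordering `M * M` gives `(-1)^k (-1)^(k(k-1)/2)` (`ofFn_prod_mul_self`), and the two signs
`(-1)^k` cancel. Invertibility of `M` follows, its inverse being a multiple of `conj(M)`.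
-/

open Matrix

/-- Complex square matrices `Γ^0, …, Γ^{d-1}` satisfy the Lorentz Clifford relations if
`Γ^μ Γ^ν + Γ^ν Γ^μ = 2 η^{μν} I` where `η = diag(+1, -1, …, -1)`. -/
def LorentzClifford {α : Type*} [Fintype α] [DecidableEq α] (d : ℕ)
    (Γ : ℕ → Matrix α α ℂ) : Prop :=
  ∀ μ < d, ∀ ν < d, Γ μ * Γ ν + Γ ν * Γ μ =
    if μ = ν then (if μ = 0 then (2 : ℂ) else (-2 : ℂ)) • 1 else 0

/-- The chiral reality pattern: `Γ^0` is real, `Γ^j` is real for odd `j`, and `Γ^j` is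
imaginary for even `j ≥ 2` (here `conj` is the entrywise complex conjugate). -/
def ChiralReality {α : Type*} [Fintype α] [DecidableEq α] (d : ℕ)
    (Γ : ℕ → Matrix α α ℂ) : Prop :=
  (Γ 0).map (starRingEnd ℂ) = Γ 0 ∧
  (∀ j, 1 ≤ j → j < d → j % 2 = 1 → (Γ j).map (starRingEnd ℂ) = Γ j) ∧
  (∀ j, 1 ≤ j → j < d → j % 2 = 0 → (Γ j).map (starRingEnd ℂ) = -(Γ j))

lemma ofFn_prod_succ {R : Type*} [Ring R] (g : ℕ → R) (m : ℕ) :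
    (List.ofFn (fun a : Fin (m + 1) => g a)).prod
      = (List.ofFn (fun a : Fin m => g a)).prod * g m := by
  rw [List.ofFn_succ']
  simp

lemma ofFn_prod_mul_of_anticomm {R : Type*} [Ring R] (g : ℕ → R) (x : R) (m : ℕ)
    (h : ∀ a < m, g a * x = -(x * g a)) :
    (List.ofFn (fun a : Fin m => g a)).prod * x
      = (-1) ^ m * (x * (List.ofFn (fun a : Fin m => g a)).prod) := by
  induction m with
  | zero => simp
  | succ m ih =>
    rw [ofFn_prod_succ, mul_assoc, h m (by omega), mul_neg, ← mul_assoc,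
      ih (fun a ha => h a (by omega)), pow_succ]
    simp only [mul_neg, mul_one, neg_mul, mul_assoc]

/-- Moving a factor `g j` past the whole product: one sign fewer than for an element
anticommuting with every factor, written as an extra minus sign. -/
lemma ofFn_prod_mul_self_factor {R : Type*} [Ring R] (g : ℕ → R) (m j : ℕ) (hj : j < m)
    (h : ∀ a < m, ∀ b < m, a ≠ b → g a * g b = -(g b * g a)) :
    (List.ofFn (fun a : Fin m => g a)).prod * g j
      = -((-1) ^ m * (g j * (List.ofFn (fun a : Fin m => g a)).prod)) := by
  induction m with
  | zero => omega
  | succ m ih =>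
    rw [ofFn_prod_succ]
    rcases Nat.lt_succ_iff_lt_or_eq.mp hj with hlt | rfl
    · rw [mul_assoc, h m (by omega) j hj (by omega), mul_neg, ← mul_assoc,
        ih hlt (fun a ha b hb => h a (by omega) b (by omega)), pow_succ]
      simp only [mul_neg, mul_one, neg_mul, mul_assoc]
    · conv_lhs => rw [ofFn_prod_mul_of_anticomm g (g j) j
        (fun a ha => h a (by omega) j (by omega) (by omega))]
      rw [pow_succ]
      simp only [mul_neg, mul_one, neg_mul, mul_assoc, neg_neg]

lemma ofFn_prod_mul_self {R : Type*} [Ring R] (g : ℕ → R) (m : ℕ)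
    (h : ∀ a < m, ∀ b < m, a ≠ b → g a * g b = -(g b * g a))
    (hsq : ∀ a < m, g a * g a = -1) :
    (List.ofFn (fun a : Fin m => g a)).prod * (List.ofFn (fun a : Fin m => g a)).prod
      = (-1) ^ m * (-1) ^ (m * (m - 1) / 2) := by
  induction m with
  | zero => simp
  | succ m ih =>
    have hP := ofFn_prod_mul_of_anticomm g (g m) m
      (fun a ha => h a (by omega) m (by omega) (by omega))
    have ih' := ih (fun a ha b hb => h a (by omega) b (by omega)) (fun a ha => hsq a (by omega))
    have hg := hsq m (by omega)
    rw [ofFn_prod_succ, Nat.triangle_succ]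
    set P := (List.ofFn (fun a : Fin m => g a)).prod
    calc P * g m * (P * g m) = ((-1) ^ m * (g m * P)) * (P * g m) := by rw [hP]
      _ = (-1) ^ m * (g m * (P * P) * g m) := by simp only [mul_assoc]
      _ = (-1) ^ m * ((-1) ^ m * (-1) ^ (m * (m - 1) / 2) * (g m * g m)) := by
        rw [ih', ← pow_add,
          (((Commute.neg_one_left (g m)).pow_left (m + m * (m - 1) / 2)).eq).symm, mul_assoc]
      _ = _ := by
        rw [hg, ← pow_add, mul_neg_one, mul_neg, ← pow_add, ← pow_add, ← neg_one_mul, ← pow_succ']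
        congr 1
        ring

lemma map_conj_ofFn_prod {n : ℕ} (g : ℕ → Matrix (Fin n) (Fin n) ℂ) (m : ℕ)
    (h : ∀ a < m, (g a).map (starRingEnd ℂ) = -(g a)) :
    ((List.ofFn (fun a : Fin m => g a)).prod).map (starRingEnd ℂ)
      = (-1) ^ m * (List.ofFn (fun a : Fin m => g a)).prod := by
  induction m with
  | zero => simp
  | succ m ih =>
    rw [ofFn_prod_succ, Matrix.map_mul, ih (fun a ha => h a (by omega)), h m (by omega), pow_succ]
    simp only [mul_neg, mul_one, neg_mul, mul_assoc]

/-- For `d = 2k+2` with `k` odd, the charge-conjugation matrix `M_C = Γ^2 Γ^4 ⋯ Γ^{2k}`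
is invertible, satisfies `M_C conj(Γ^μ) M_C⁻¹ = -Γ^μ` for all `μ`, and
`M_C · conj(M_C) = (-1)^{k(k-1)/2} I` (computing `C²` on a Dirac fermion). -/
theorem charge_conjugation_matrix_k_odd {n k : ℕ} (hk : Odd k)
    (Γ : ℕ → Matrix (Fin n) (Fin n) ℂ)
    (hΓ : LorentzClifford (2 * k + 2) Γ)
    (hreal : ChiralReality (2 * k + 2) Γ)
    (M : Matrix (Fin n) (Fin n) ℂ)
    (hM : M = (List.ofFn (fun a : Fin k => Γ (2 * ((a : ℕ) + 1)))).prod) :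
    IsUnit M ∧
    (∀ μ < 2 * k + 2, M * (Γ μ).map (starRingEnd ℂ) * M⁻¹ = -(Γ μ)) ∧
    M * M.map (starRingEnd ℂ) = ((-1 : ℂ) ^ (k * (k - 1) / 2)) • 1 := by
  obtain ⟨hr0, hro, hre⟩ := hreal
  have hanti : ∀ μ < 2 * k + 2, ∀ ν < 2 * k + 2, μ ≠ ν → Γ μ * Γ ν = -(Γ ν * Γ μ) := by
    intro μ hμ ν hν hne
    have := hΓ μ hμ ν hν
    rw [if_neg hne] at this
    exact eq_neg_of_add_eq_zero_left this
  let g : ℕ → Matrix (Fin n) (Fin n) ℂ := fun a => Γ (2 * (a + 1))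
  have hg : ∀ a < k, ∀ b < k, a ≠ b → g a * g b = -(g b * g a) := fun a ha b hb hab =>
    hanti _ (by omega) _ (by omega) (by omega)
  have hsq : ∀ a < k, g a * g a = -1 := by
    intro a ha
    have h2 := hΓ (2 * (a + 1)) (by omega) (2 * (a + 1)) (by omega)
    rw [if_pos rfl, if_neg (by omega), ← two_smul ℂ, neg_smul, ← smul_neg] at h2
    exact smul_right_injective _ (two_ne_zero : (2 : ℂ) ≠ 0) h2
  have hMg : M = (List.ofFn (fun a : Fin k => g a)).prod := hM
  have hconj : M.map (starRingEnd ℂ) = -M := by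
    rw [hMg, map_conj_ofFn_prod g k (fun a ha => hre _ (by omega) (by omega) (by omega)),
      hk.neg_one_pow, neg_one_mul]
  have hMM : M * M = -(-1) ^ (k * (k - 1) / 2) := by
    rw [hMg, ofFn_prod_mul_self g k hg hsq, hk.neg_one_pow, neg_one_mul]
  have hunit : IsUnit M := by
    have : IsUnit (M * M) := by
      rw [hMM]
      exact (isUnit_one.neg.pow _).neg
    exact ((Commute.refl M).isUnit_mul_iff.mp this).1
  refine ⟨hunit, fun μ hμ => ?_, ?_⟩
  · have key : M * (Γ μ).map (starRingEnd ℂ) = -(Γ μ) * M := by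
      by_cases hev : 1 ≤ μ ∧ μ % 2 = 0
      · obtain ⟨j, rfl⟩ : ∃ j, μ = 2 * (j + 1) := ⟨μ / 2 - 1, by omega⟩
        have := ofFn_prod_mul_self_factor g k j (by omega) hg
        rw [← hMg, hk.neg_one_pow, neg_one_mul, neg_neg] at this
        rw [hre _ hev.1 hμ hev.2, mul_neg, neg_mul]
        exact congrArg Neg.neg this
      · have hr : (Γ μ).map (starRingEnd ℂ) = Γ μ := by
          rcases Nat.eq_zero_or_pos μ with rfl | hpos
          · exact hr0
          · exact hro μ hpos hμ (by omega)
        have := ofFn_prod_mul_of_anticomm g (Γ μ) k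
          (fun a ha => hanti _ (by omega) _ hμ (by omega))
        rw [← hMg, hk.neg_one_pow, neg_one_mul] at this
        rw [hr, this, neg_mul]
    rw [key, mul_assoc, Matrix.mul_nonsing_inv _ ((Matrix.isUnit_iff_isUnit_det _).mp hunit),
      mul_one]
  · rw [hconj, mul_neg, hMM, neg_neg]
    rcases Nat.even_or_odd (k * (k - 1) / 2) with h' | h' <;>
    simp [h'.neg_one_pow]
end

section
/- Let d = 2k+2 with k even, and let Γ^0, …, Γ^{2k+1} be complex n × n matrices satisfying the Lorentz Clifford relations and the chiral reality pattern. Then M := Γ^0 Γ^1 Γ^3 Γ^5 ⋯ Γ^{2k+1} (the product of Γ^0 with all odd-index Gamma matrices) is invertible, M conj(Γ^μ) M^{−1} = −Γ^μ for every μ = 0, 1, …, 2k+1, and M · conj(M) = (−1)^{k(k+1)/2} I. (This M is the charge-conjugation matrix M_C, and M·conj(M) computes C^2 on a Dirac fermion.) -/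
/-!
The factors of `M = Γ^0 Γ^1 Γ^3 ⋯ Γ^{2k+1}` are all real, so `conj M = M` and `M conj(M) = M²`.
Write `M = Γ^0 P` with `P` the product of the `k + 1` odd-index matrices. Moving `Γ^μ` through a
product of `m` distinct Gamma matrices costs `(-1)^m` when `Γ^μ` is not a factor
(`oddProd_mul_of_not_mem`) and `(-1)^(m+1)` when it is (`oddProd_mul_of_mem`).
Since `M` has an even number `k + 2` of factors, it anticommutes with its own (real) factors and
commutes with the remaining (imaginary) ones; in both cases `M conj(Γ^μ) = -Γ^μ M`.
The same sign count gives `P² = (-1)^(m(m+1)/2)` for `m = k + 1` factors (`oddProd_sq`), and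
`P Γ^0 = -Γ^0 P` then yields `M² = -P²`. In particular `M²` is `±1`, so `M` is invertible.
-/

open Matrix

/-- The product `Γ^1 Γ^3 ⋯ Γ^{2m-1}` of the first `m` odd-index Gamma matrices. -/
def oddProd {n : ℕ} (Γ : ℕ → Matrix (Fin n) (Fin n) ℂ) : ℕ → Matrix (Fin n) (Fin n) ℂ
  | 0 => 1
  | m + 1 => oddProd Γ m * Γ (2 * m + 1)

lemma ofFn_prod_eq_oddProd {n : ℕ} (Γ : ℕ → Matrix (Fin n) (Fin n) ℂ) (m : ℕ) :
    (List.ofFn (fun a : Fin m => Γ (2 * (a : ℕ) + 1))).prod = oddProd Γ m := by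
  induction m with
  | zero => simp [oddProd]
  | succ m ih =>
    rw [List.ofFn_succ', List.concat_eq_append]
    simp [oddProd, ← ih]

lemma LorentzClifford.anticomm {n d : ℕ} {Γ : ℕ → Matrix (Fin n) (Fin n) ℂ}
    (hΓ : LorentzClifford d Γ) {μ ν : ℕ} (hμ : μ < d) (hν : ν < d) (h : μ ≠ ν) :
    Γ μ * Γ ν = -(Γ ν * Γ μ) := by
  have := hΓ μ hμ ν hν
  rw [if_neg h] at this
  exact eq_neg_of_add_eq_zero_left this

lemma LorentzClifford.sq_zero {n d : ℕ} {Γ : ℕ → Matrix (Fin n) (Fin n) ℂ}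
    (hΓ : LorentzClifford d Γ) (hd : 0 < d) : Γ 0 * Γ 0 = 1 := by
  have := hΓ 0 hd 0 hd
  rw [if_pos rfl, if_pos rfl, ← two_smul ℂ] at this
  exact smul_right_injective _ (two_ne_zero : (2 : ℂ) ≠ 0) this

lemma LorentzClifford.sq_pos {n d : ℕ} {Γ : ℕ → Matrix (Fin n) (Fin n) ℂ}
    (hΓ : LorentzClifford d Γ) {μ : ℕ} (hμ : μ < d) (h : μ ≠ 0) : Γ μ * Γ μ = -1 := by
  have := hΓ μ hμ μ hμ
  rw [if_pos rfl, if_neg h, ← two_smul ℂ, neg_smul, ← smul_neg] at this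
  exact smul_right_injective _ (two_ne_zero : (2 : ℂ) ≠ 0) this

lemma oddProd_mul_of_not_mem {n d : ℕ} {Γ : ℕ → Matrix (Fin n) (Fin n) ℂ}
    (hΓ : LorentzClifford d Γ) {μ : ℕ} (hμ : μ < d) (m : ℕ) (hm : 2 * m ≤ d)
    (h : ∀ j < m, 2 * j + 1 ≠ μ) :
    oddProd Γ m * Γ μ = (-1 : ℂ) ^ m • (Γ μ * oddProd Γ m) := by
  induction m with
  | zero => simp [oddProd]
  | succ m ih =>
    have ih := ih (by omega) (fun j hj => h j (by omega))
    rw [oddProd, mul_assoc, hΓ.anticomm (by omega) hμ (h m (by omega)), mul_neg, ← mul_assoc, ih,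
      pow_succ, smul_mul_assoc, mul_assoc]
    simp

lemma oddProd_mul_of_mem {n d : ℕ} {Γ : ℕ → Matrix (Fin n) (Fin n) ℂ}
    (hΓ : LorentzClifford d Γ) (m : ℕ) (hm : 2 * m ≤ d) {j : ℕ} (hj : j < m) :
    oddProd Γ m * Γ (2 * j + 1) = (-1 : ℂ) ^ (m + 1) • (Γ (2 * j + 1) * oddProd Γ m) := by
  induction m with
  | zero => omega
  | succ m ih =>
    rcases Nat.lt_succ_iff_lt_or_eq.mp hj with hj' | rfl
    · have ih := ih (by omega) hj'
      rw [oddProd, mul_assoc, hΓ.anticomm (by omega) (by omega) (by omega), mul_neg, ← mul_assoc,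
        ih, pow_succ _ (m + 1), smul_mul_assoc, mul_assoc]
      simp
    · have h := oddProd_mul_of_not_mem hΓ (μ := 2 * j + 1) (by omega) j (by omega)
        (fun i hi => by omega)
      rw [oddProd, ← mul_assoc (Γ (2 * j + 1)), h, ← smul_mul_assoc]
      simp [pow_succ]

lemma oddProd_sq {n d : ℕ} {Γ : ℕ → Matrix (Fin n) (Fin n) ℂ}
    (hΓ : LorentzClifford d Γ) (m : ℕ) (hm : 2 * m ≤ d) :
    oddProd Γ m * oddProd Γ m = (-1 : ℂ) ^ (m * (m + 1) / 2) • 1 := by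
  induction m with
  | zero => simp [oddProd]
  | succ m ih =>
    have ih := ih (by omega)
    have h := oddProd_mul_of_not_mem hΓ (μ := 2 * m + 1) (by omega) m (by omega)
        (fun i hi => by omega)
    have hs := hΓ.sq_pos (μ := 2 * m + 1) (by omega) (by omega)
    have he : (m + 1) * (m + 1 + 1) / 2 = m * (m + 1) / 2 + (m + 1) := by
      rw [show (m + 1) * (m + 1 + 1) = m * (m + 1) + (m + 1) * 2 by ring,
        Nat.add_mul_div_right _ _ (by norm_num)]
    calc oddProd Γ (m + 1) * oddProd Γ (m + 1)
        = (oddProd Γ m * Γ (2 * m + 1)) * (oddProd Γ m * Γ (2 * m + 1)) := rfl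
      _ = (-1 : ℂ) ^ m • ((oddProd Γ m * Γ (2 * m + 1)) * (Γ (2 * m + 1) * oddProd Γ m)) := by
          rw [← mul_smul_comm, ← h]
      _ = (-1 : ℂ) ^ m • (oddProd Γ m * (Γ (2 * m + 1) * Γ (2 * m + 1)) * oddProd Γ m) := by
          simp only [mul_assoc]
      _ = (-1 : ℂ) ^ ((m + 1) * (m + 1 + 1) / 2) • 1 := by
          rw [hs, mul_neg, mul_one, neg_mul, ih, he, pow_add, pow_succ, ← smul_neg, smul_smul]
          simp [mul_comm]

lemma oddProd_conj {n d : ℕ} {Γ : ℕ → Matrix (Fin n) (Fin n) ℂ}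
    (hreal : ChiralReality d Γ) (m : ℕ) (hm : 2 * m ≤ d) :
    (oddProd Γ m).map (starRingEnd ℂ) = oddProd Γ m := by
  induction m with
  | zero => simp [oddProd]
  | succ m ih =>
    rw [oddProd, Matrix.map_mul, ih (by omega), hreal.2.1 _ (by omega) (by omega) (by omega)]

/-- For `d = 2k+2` with `k` even, the charge-conjugation matrix
`M_C = Γ^0 Γ^1 Γ^3 ⋯ Γ^{2k+1}` is invertible, satisfies `M_C conj(Γ^μ) M_C⁻¹ = -Γ^μ`
for all `μ`, and `M_C · conj(M_C) = (-1)^{k(k+1)/2} I` (computing `C²` on a Dirac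
fermion). -/
theorem charge_conjugation_matrix_k_even {n k : ℕ} (hk : Even k)
    (Γ : ℕ → Matrix (Fin n) (Fin n) ℂ)
    (hΓ : LorentzClifford (2 * k + 2) Γ)
    (hreal : ChiralReality (2 * k + 2) Γ)
    (M : Matrix (Fin n) (Fin n) ℂ)
    (hM : M = Γ 0 * (List.ofFn (fun a : Fin (k + 1) => Γ (2 * (a : ℕ) + 1))).prod) :
    IsUnit M ∧
    (∀ μ < 2 * k + 2, M * (Γ μ).map (starRingEnd ℂ) * M⁻¹ = -(Γ μ)) ∧
    M * M.map (starRingEnd ℂ) = ((-1 : ℂ) ^ (k * (k + 1) / 2)) • 1 := by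
  rw [ofFn_prod_eq_oddProd] at hM
  have hodd : (-1 : ℂ) ^ (k + 1) = -1 := hk.add_one.neg_one_pow
  have hP0 : oddProd Γ (k + 1) * Γ 0 = -(Γ 0 * oddProd Γ (k + 1)) := by
    rw [oddProd_mul_of_not_mem hΓ (by omega) (k + 1) (by omega) (fun j _ => by omega), hodd]
    simp
  have h00 : Γ 0 * Γ 0 = 1 := hΓ.sq_zero (by omega)
  have hconj : M.map (starRingEnd ℂ) = M := by
    rw [hM, Matrix.map_mul, hreal.1, oddProd_conj hreal (k + 1) (by omega)]
  have hsq : M * M = ((-1 : ℂ) ^ (k * (k + 1) / 2)) • 1 := by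
    have he : (k + 1) * (k + 1 + 1) / 2 = k * (k + 1) / 2 + (k + 1) := by
      rw [show (k + 1) * (k + 1 + 1) = k * (k + 1) + (k + 1) * 2 by ring,
        Nat.add_mul_div_right _ _ (by norm_num)]
    calc M * M = Γ 0 * (oddProd Γ (k + 1) * Γ 0) * oddProd Γ (k + 1) := by
          rw [hM]; simp only [mul_assoc]
      _ = -((Γ 0 * Γ 0) * (oddProd Γ (k + 1) * oddProd Γ (k + 1))) := by
          rw [hP0]; simp only [mul_assoc, mul_neg, neg_mul]
      _ = _ := by
          rw [h00, one_mul, oddProd_sq hΓ (k + 1) (by omega), he, pow_add, hodd]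
          simp
  have hunit : IsUnit M := by
    refine IsUnit.of_mul_eq_one (((-1 : ℂ) ^ (k * (k + 1) / 2)) • M) ?_
    rw [mul_smul_comm, hsq, smul_smul, ← mul_pow]
    simp
  refine ⟨hunit, fun μ hμ => ?_, by rw [hconj, hsq]⟩
  have key : M * (Γ μ).map (starRingEnd ℂ) = -(Γ μ) * M := by
    rcases Nat.eq_zero_or_pos μ with rfl | hpos
    · rw [hreal.1, hM, mul_assoc, hP0, mul_neg, neg_mul]
    rcases Nat.mod_two_eq_zero_or_one μ with h | h
    -- imaginary `Γ^μ`, not a factor of `M`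
    · rw [hreal.2.2 μ hpos hμ h, hM, mul_neg, mul_assoc,
        oddProd_mul_of_not_mem hΓ hμ (k + 1) (by omega) (fun j _ => by omega), hodd,
        neg_one_smul, mul_neg, ← mul_assoc, hΓ.anticomm (by omega) hμ hpos.ne]
      simp [mul_assoc]
    -- real `Γ^μ`, one of the odd-index factors of `M`
    · obtain ⟨j, rfl⟩ : ∃ j, μ = 2 * j + 1 := ⟨μ / 2, by omega⟩
      rw [hreal.2.1 _ hpos hμ h, hM, mul_assoc,
        oddProd_mul_of_mem hΓ (k + 1) (by omega) (by omega), pow_succ, hodd,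
        ← mul_smul_comm, ← mul_assoc, hΓ.anticomm (by omega) hμ hpos.ne]
      simp [mul_assoc]
  rw [key, Matrix.mul_assoc, Matrix.mul_nonsing_inv _ ((Matrix.isUnit_iff_isUnit_det M).mp hunit),
    mul_one]
end

section
/- Let d = 2k+3 and let Γ^0, …, Γ^{2k+2} be complex n × n matrices (n ≥ 1) satisfying the Lorentz Clifford relations such that Γ^{2k+2} = i^{k+1} Γ^0 Γ^1 ⋯ Γ^{2k+1}. If M is an invertible matrix with M conj(Γ^μ) M^{−1} = −Γ^μ for all μ = 0, 1, …, 2k+1, then necessarily M conj(Γ^{2k+2}) M^{−1} = (−1)^{k+1} Γ^{2k+2}. Consequently, when k is odd there is no invertible matrix M satisfying M conj(Γ^μ) M^{−1} = −Γ^μ for all μ = 0, 1, …, 2k+2 (i.e. the Dirac mass term breaks charge conjugation C in spacetime dimensions d ≡ 1 mod 4). -/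
/-!
Entrywise conjugation followed by conjugation by `M` is a conjugate-linear ring homomorphism, so a
product of `m` matrices that are each sent to their negatives is multiplied by `(-1) ^ m`
(`conj_prod_range`). For `m = 2k+2` this sign is `1`, and the only remaining effect on
`Γ^{2k+2} = i^{k+1} Γ^0 ⋯ Γ^{2k+1}` is `conj (i^{k+1}) = (-1)^{k+1} i^{k+1}`. When `k` is odd the
resulting sign is `+1`, so an `M` that also negates `Γ^{2k+2}` would force `Γ^{2k+2} = 0`,
contradicting `(Γ^{2k+2})² = -1`.
-/

open Matrix

lemma conj_prod_range {n m : ℕ} (Γ : ℕ → Matrix (Fin n) (Fin n) ℂ)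
    (M : Matrix (Fin n) (Fin n) ℂ) (hM : IsUnit M)
    (h : ∀ μ < m, M * (Γ μ).map (starRingEnd ℂ) * M⁻¹ = -(Γ μ)) :
    M * (((List.range m).map Γ).prod).map (starRingEnd ℂ) * M⁻¹ =
      ((-1 : ℂ) ^ m) • ((List.range m).map Γ).prod := by
  have hdet : IsUnit M.det := (Matrix.isUnit_iff_isUnit_det M).mp hM
  induction m with
  | zero => simp [Matrix.map_one, Matrix.mul_nonsing_inv M hdet]
  | succ m ih =>
    have ih := ih fun μ hμ => h μ (by omega)
    have hm := h m (by omega)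
    rw [List.range_succ, List.map_append, List.prod_append, List.map_singleton,
      List.prod_singleton, Matrix.map_mul]
    set P := ((List.range m).map Γ).prod
    calc M * (P.map (starRingEnd ℂ) * (Γ m).map (starRingEnd ℂ)) * M⁻¹
        = M * P.map (starRingEnd ℂ) * (M⁻¹ * M) * (Γ m).map (starRingEnd ℂ) * M⁻¹ := by
          rw [Matrix.nonsing_inv_mul M hdet]; simp only [mul_assoc, one_mul]
      _ = (M * P.map (starRingEnd ℂ) * M⁻¹) * (M * (Γ m).map (starRingEnd ℂ) * M⁻¹) := by
          simp only [mul_assoc]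
      _ = ((-1 : ℂ) ^ (m + 1)) • (P * Γ m) := by
          rw [ih, hm, pow_succ]; simp

/-- For odd `d = 2k+3` with `Γ^{2k+2} = i^{k+1} Γ^0 ⋯ Γ^{2k+1}`: any invertible `M` with
`M conj(Γ^μ) M⁻¹ = -Γ^μ` for `μ ≤ 2k+1` necessarily satisfies
`M conj(Γ^{2k+2}) M⁻¹ = (-1)^{k+1} Γ^{2k+2}`; hence for odd `k` no invertible `M`
satisfies `M conj(Γ^μ) M⁻¹ = -Γ^μ` for all `μ ≤ 2k+2` (the Dirac mass term breaks
charge conjugation `C` in spacetime dimensions `d ≡ 1 mod 4`). -/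
theorem mass_breaks_C_odd_d {n k : ℕ} (hn : 1 ≤ n)
    (Γ : ℕ → Matrix (Fin n) (Fin n) ℂ)
    (hΓ : LorentzClifford (2 * k + 3) Γ)
    (hlast : Γ (2 * k + 2) = Complex.I ^ (k + 1) • ((List.range (2 * k + 2)).map Γ).prod) :
    (∀ M : Matrix (Fin n) (Fin n) ℂ, IsUnit M →
      (∀ μ < 2 * k + 2, M * (Γ μ).map (starRingEnd ℂ) * M⁻¹ = -(Γ μ)) →
      M * (Γ (2 * k + 2)).map (starRingEnd ℂ) * M⁻¹ = ((-1 : ℂ) ^ (k + 1)) • Γ (2 * k + 2)) ∧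
    (Odd k → ¬ ∃ M : Matrix (Fin n) (Fin n) ℂ, IsUnit M ∧
      ∀ μ < 2 * k + 3, M * (Γ μ).map (starRingEnd ℂ) * M⁻¹ = -(Γ μ)) := by
  have key : ∀ M : Matrix (Fin n) (Fin n) ℂ, IsUnit M →
      (∀ μ < 2 * k + 2, M * (Γ μ).map (starRingEnd ℂ) * M⁻¹ = -(Γ μ)) →
      M * (Γ (2 * k + 2)).map (starRingEnd ℂ) * M⁻¹ =
        ((-1 : ℂ) ^ (k + 1)) • Γ (2 * k + 2) := by
    intro M hM h
    have hP := conj_prod_range Γ M hM h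
    rw [Even.neg_one_pow ⟨k + 1, by ring⟩, one_smul] at hP
    rw [hlast]
    set P := ((List.range (2 * k + 2)).map Γ).prod
    have hs : (Complex.I ^ (k + 1) • P).map (starRingEnd ℂ) =
        ((-1 : ℂ) ^ (k + 1) * Complex.I ^ (k + 1)) • P.map (starRingEnd ℂ) := by
      ext i j
      simp [← mul_pow]
    rw [hs, Matrix.mul_smul, Matrix.smul_mul, hP, mul_smul]
  refine ⟨key, ?_⟩
  rintro hk ⟨M, hM, h⟩
  have h1 := key M hM fun μ hμ => h μ (by omega)
  rw [h _ (by omega), Even.neg_one_pow hk.add_one, one_smul] at h1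
  have h0 : Γ (2 * k + 2) = 0 := by
    ext i j
    have := congrFun (congrFun h1 i) j
    simp only [Matrix.neg_apply] at this
    simpa using CharZero.neg_eq_self_iff.mp this
  have h2 := hΓ (2 * k + 2) (by omega) (2 * k + 2) (by omega)
  -- A diagonal entry, available since `n ≥ 1`, of `2 (Γ^{2k+2})² = -2` gives `0 = -2`.
  have h3 := congrFun (congrFun h2 ⟨0, hn⟩) ⟨0, hn⟩
  simp [h0] at h3
end

section
/- Let d = 2k+2 with k even, and let Γ^0, …, Γ^{2k+1} be complex n × n matrices satisfying the Lorentz Clifford relations and the chiral reality pattern. Then M := Γ^0 Γ^2 Γ^4 ⋯ Γ^{2k} (the product of all even-index Gamma matrices) is invertible, satisfies M conj(Γ^0) M^{−1} = Γ^0 and M conj(Γ^j) M^{−1} = −Γ^j for j = 1, …, 2k+1, and conj(M) · M = (−1)^{k(k+1)/2} I. (This M is the time-reversal matrix M_T, and conj(M)·M computes T^2 on a Dirac fermion.) -/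
/-!
Distinct Gamma matrices anticommute, so moving `Γ^j` through a product of `m` even-index Gamma
matrices costs the sign `(-1)^m` if `Γ^j` is not a factor (`evenProd_mul_of_notMem`) and
`(-1)^(m-1)` if it is (`evenProd_mul_of_mem`). For `M` there are `k + 1` factors with `k` even, so
`M` commutes with the even-index and anticommutes with the odd-index Gamma matrices. Together with
the reality pattern this gives the conjugation identities. The value of `conj(M) * M` follows by
induction on the number of factors (`conj_evenProd_mul_self`); as it is `±1`, `M` is invertible.
-/

open Matrix

/-- The product `Γ^0 Γ^2 ⋯ Γ^{2(m-1)}` of the first `m` even-index Gamma matrices; the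
time-reversal matrix is the case `m = k + 1`. -/
def evenProd {n : ℕ} (Γ : ℕ → Matrix (Fin n) (Fin n) ℂ) (m : ℕ) : Matrix (Fin n) (Fin n) ℂ :=
  (List.ofFn (fun a : Fin m => Γ (2 * (a : ℕ)))).prod

lemma evenProd_zero {n : ℕ} (Γ : ℕ → Matrix (Fin n) (Fin n) ℂ) : evenProd Γ 0 = 1 := by
  simp [evenProd]

lemma evenProd_succ {n : ℕ} (Γ : ℕ → Matrix (Fin n) (Fin n) ℂ) (m : ℕ) :
    evenProd Γ (m + 1) = evenProd Γ m * Γ (2 * m) := by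
  rw [evenProd, List.ofFn_succ', List.concat_eq_append, List.prod_append]
  simp [evenProd]

lemma gamma_anticomm {n d : ℕ} {Γ : ℕ → Matrix (Fin n) (Fin n) ℂ} (hΓ : LorentzClifford d Γ)
    {i j : ℕ} (hi : i < d) (hj : j < d) (hij : i ≠ j) : Γ i * Γ j = -(Γ j * Γ i) := by
  have h := hΓ i hi j hj
  rw [if_neg hij] at h
  exact eq_neg_of_add_eq_zero_left h

lemma gamma_sq {n d : ℕ} {Γ : ℕ → Matrix (Fin n) (Fin n) ℂ} (hΓ : LorentzClifford d Γ)
    {i : ℕ} (hi : i < d) : Γ i * Γ i = (if i = 0 then (1 : ℂ) else -1) • 1 := by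
  have h := hΓ i hi i hi
  rw [if_pos rfl, ← two_smul ℂ] at h
  apply smul_right_injective _ (two_ne_zero (α := ℂ))
  simp only
  rw [h, smul_smul]
  split_ifs <;> norm_num

/-- A Gamma matrix that is not a factor of the product anticommutes with each of its `m` factors. -/
lemma evenProd_mul_of_notMem {n d : ℕ} {Γ : ℕ → Matrix (Fin n) (Fin n) ℂ}
    (hΓ : LorentzClifford d Γ) {j : ℕ} (hj : j < d) (m : ℕ) (hm : 2 * m ≤ d)
    (hne : ∀ a < m, 2 * a ≠ j) :
    evenProd Γ m * Γ j = (-1 : ℂ) ^ m • (Γ j * evenProd Γ m) := by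
  induction m with
  | zero => simp [evenProd_zero]
  | succ m ih =>
    have ih' := ih (by omega) (fun a ha => hne a (by omega))
    rw [evenProd_succ, mul_assoc,
      gamma_anticomm hΓ (by omega) hj (hne m (by omega)), mul_neg, ← mul_assoc, ih',
      smul_mul_assoc, mul_assoc, pow_succ]
    simp

/-- A factor of the product commutes with itself and anticommutes with the other `m - 1` factors;
the sign `(-1)^(m-1)` is written `(-1)^(m+1)`. -/
lemma evenProd_mul_of_mem {n d : ℕ} {Γ : ℕ → Matrix (Fin n) (Fin n) ℂ}
    (hΓ : LorentzClifford d Γ) (m : ℕ) (hm : 2 * m ≤ d) {a : ℕ} (ha : a < m) :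
    evenProd Γ m * Γ (2 * a) = (-1 : ℂ) ^ (m + 1) • (Γ (2 * a) * evenProd Γ m) := by
  induction m with
  | zero => omega
  | succ m ih =>
    rw [evenProd_succ]
    rcases Nat.lt_succ_iff_lt_or_eq.mp ha with h | rfl
    · rw [mul_assoc, gamma_anticomm hΓ (i := 2 * m) (j := 2 * a) (by omega) (by omega)
        (by omega), mul_neg, ← mul_assoc, ih (by omega) h, smul_mul_assoc, mul_assoc,
        pow_succ _ (m + 1)]
      simp
    · have h := evenProd_mul_of_notMem hΓ (j := 2 * a) (by omega) a (by omega)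
        (fun b hb => by omega)
      rw [← mul_assoc (Γ (2 * a))]
      conv_lhs => rw [h]
      rw [smul_mul_assoc, pow_succ, pow_succ]
      simp

/-- Passing from `m + 1` to `m + 2` factors, the new factor `Γ^{2(m+1)}` contributes one sign from
being imaginary, one from squaring to `-1`, and `(-1)^(m+1)` from moving past the `m + 1` old
factors; hence the triangular number in the exponent. -/
lemma conj_evenProd_mul_self {n d : ℕ} {Γ : ℕ → Matrix (Fin n) (Fin n) ℂ}
    (hΓ : LorentzClifford d Γ) (hreal : ChiralReality d Γ) (m : ℕ) (hm : 2 * (m + 1) ≤ d) :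
    (evenProd Γ (m + 1)).map (starRingEnd ℂ) * evenProd Γ (m + 1)
      = ((-1 : ℂ) ^ (m * (m + 1) / 2)) • 1 := by
  induction m with
  | zero =>
    have h := gamma_sq hΓ (i := 0) (by omega)
    simpa [evenProd_succ, evenProd_zero, hreal.1] using h
  | succ m ih =>
    have hc := hreal.2.2 (2 * (m + 1)) (by omega) (by omega) (by omega)
    have hs := gamma_sq hΓ (i := 2 * (m + 1)) (by omega)
    rw [if_neg (by omega)] at hs
    have hcomm := evenProd_mul_of_notMem hΓ (j := 2 * (m + 1)) (by omega) (m + 1) (by omega)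
      (fun b hb => by omega)
    have he : (m + 1) * (m + 1 + 1) / 2 = m * (m + 1) / 2 + (m + 1) := by
      rw [show (m + 1) * (m + 1 + 1) = m * (m + 1) + (m + 1) * 2 by ring]
      omega
    rw [evenProd_succ Γ (m + 1), Matrix.map_mul, hc]
    generalize evenProd Γ (m + 1) = P at *
    generalize Γ (2 * (m + 1)) = G at *
    have hcomm' : G * P = (-1 : ℂ) ^ (m + 1) • (P * G) := by
      rw [hcomm, smul_smul, ← mul_pow]
      simp
    calc P.map (starRingEnd ℂ) * -G * (P * G)
        = -(P.map (starRingEnd ℂ) * (G * P) * G) := by noncomm_ring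
      _ = -((-1 : ℂ) ^ (m + 1) • (P.map (starRingEnd ℂ) * P * (G * G))) := by
          rw [hcomm', mul_smul_comm, smul_mul_assoc]
          simp only [mul_assoc]
      _ = ((-1 : ℂ) ^ ((m + 1) * (m + 1 + 1) / 2)) • 1 := by
          rw [ih (by omega), hs, he, pow_add _ (m * (m + 1) / 2) (m + 1)]
          simp [smul_smul, mul_comm]

/-- For `d = 2k+2` with `k` even, the time-reversal matrix `M_T = Γ^0 Γ^2 Γ^4 ⋯ Γ^{2k}`
is invertible, satisfies `M_T conj(Γ^0) M_T⁻¹ = Γ^0` and `M_T conj(Γ^j) M_T⁻¹ = -Γ^j`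
for `1 ≤ j ≤ 2k+1`, and `conj(M_T) · M_T = (-1)^{k(k+1)/2} I` (computing `T²` on a
Dirac fermion). -/
theorem time_reversal_matrix_k_even {n k : ℕ} (hk : Even k)
    (Γ : ℕ → Matrix (Fin n) (Fin n) ℂ)
    (hΓ : LorentzClifford (2 * k + 2) Γ)
    (hreal : ChiralReality (2 * k + 2) Γ)
    (M : Matrix (Fin n) (Fin n) ℂ)
    (hM : M = (List.ofFn (fun a : Fin (k + 1) => Γ (2 * (a : ℕ)))).prod) :
    IsUnit M ∧
    M * (Γ 0).map (starRingEnd ℂ) * M⁻¹ = Γ 0 ∧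
    (∀ j, 1 ≤ j → j < 2 * k + 2 → M * (Γ j).map (starRingEnd ℂ) * M⁻¹ = -(Γ j)) ∧
    M.map (starRingEnd ℂ) * M = ((-1 : ℂ) ^ (k * (k + 1) / 2)) • 1 := by
  have hM' : M = evenProd Γ (k + 1) := hM
  have hsq := conj_evenProd_mul_self hΓ hreal k (by omega)
  rw [← hM'] at hsq
  have hunit : IsUnit M := by
    refine isUnit_iff_exists_inv'.mpr
      ⟨(-1 : ℂ) ^ (k * (k + 1) / 2) • M.map (starRingEnd ℂ), ?_⟩
    rw [smul_mul_assoc, hsq, smul_smul, ← mul_pow]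
    simp
  have hinv : M * M⁻¹ = 1 := Matrix.mul_nonsing_inv M ((Matrix.isUnit_iff_isUnit_det M).mp hunit)
  have heven : ∀ a < k + 1, M * Γ (2 * a) = Γ (2 * a) * M := by
    intro a ha
    have h := evenProd_mul_of_mem hΓ (k + 1) (by omega) ha
    rwa [← hM', pow_add, pow_add, hk.neg_one_pow, one_mul, pow_one, neg_one_mul, neg_neg, one_smul] at h
  have hodd : ∀ j < 2 * k + 2, j % 2 = 1 → M * Γ j = -(Γ j * M) := by
    intro j hj hj1
    have h := evenProd_mul_of_notMem hΓ hj (k + 1) (by omega) (fun a _ => by omega)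
    rwa [← hM', pow_succ, hk.neg_one_pow, one_mul, neg_one_smul] at h
  refine ⟨hunit, ?_, ?_, hsq⟩
  · have h0 : M * Γ 0 = Γ 0 * M := heven 0 (by omega)
    rw [hreal.1, h0, mul_assoc, hinv, mul_one]
  · intro j hj1 hj
    rcases Nat.mod_two_eq_zero_or_one j with h | h
    · have hc := heven (j / 2) (by omega)
      rw [show 2 * (j / 2) = j by omega] at hc
      rw [hreal.2.2 j hj1 hj h, mul_neg, hc, neg_mul, mul_assoc, hinv, mul_one]
    · rw [hreal.2.1 j hj1 hj h, hodd j hj h, neg_mul, mul_assoc, hinv, mul_one]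
end

section
/- Let d = 2k+3 and let Γ^0, …, Γ^{2k+2} be complex n × n matrices (n ≥ 1) satisfying the Lorentz Clifford relations such that Γ^{2k+2} = i^{k+1} Γ^0 Γ^1 ⋯ Γ^{2k+1}. Then for every j ∈ {1, …, 2k+2} there is no invertible matrix M satisfying M Γ^0 M^{−1} = Γ^0, M Γ^j M^{−1} = −Γ^j, and M Γ^i M^{−1} = Γ^i for all i ∈ {1, …, 2k+2} with i ≠ j (i.e. the Dirac mass term breaks the mirror reflection R_j in every odd spacetime dimension). -/
/-!
Conjugation by `M` is multiplicative and negates exactly one of `Γ^0, …, Γ^{2k+2}`, namely `Γ^j`.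
Hence it multiplies `Γ^0 ⋯ Γ^{2k+1}` by `-1` if `j ≤ 2k+1` and fixes it if `j = 2k+2`
(`mul_prod_of_reflection`), while it fixes `Γ^{2k+2}` in the first case and negates it in the
second. Since `Γ^{2k+2}` is a scalar multiple of that product, either case gives
`Γ^{2k+2} M = -Γ^{2k+2} M`. This is impossible, because `M` is invertible, `(Γ^{2k+2})² = -1`
and `n ≥ 1`.
-/

open Matrix

/-- Moving `M` past `Γ^0 ⋯ Γ^{m-1}` costs the sign `-1` exactly when `Γ^j`, the only factor
anticommuting with `M`, occurs in the product. -/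
lemma mul_prod_of_reflection {n : ℕ} (Γ : ℕ → Matrix (Fin n) (Fin n) ℂ)
    (M : Matrix (Fin n) (Fin n) ℂ) (j m : ℕ)
    (h : ∀ i < m, M * Γ i = (if i = j then (-1 : ℂ) else 1) • (Γ i * M)) :
    M * ((List.range m).map Γ).prod =
      (if j < m then (-1 : ℂ) else 1) • (((List.range m).map Γ).prod * M) := by
  induction m with
  | zero => simp
  | succ m ih =>
    rw [List.range_succ, List.map_append, List.prod_append]
    simp only [List.map_cons, List.map_nil, List.prod_cons, List.prod_nil, mul_one]
    rw [← mul_assoc, ih fun i hi => h i (by omega), smul_mul_assoc, mul_assoc _ M,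
      h m (by omega), mul_smul_comm, smul_smul, mul_assoc]
    congr 1
    rcases lt_trichotomy j m with hjm | hjm | hjm
    · rw [if_pos hjm, if_neg (by omega), if_pos (by omega), mul_one]
    · rw [if_neg (by omega), if_pos hjm.symm, if_pos (by omega), one_mul]
    · rw [if_neg (by omega), if_neg (by omega), if_neg (by omega), one_mul]

/-- For odd `d = 2k+3` with `Γ^{2k+2} = i^{k+1} Γ^0 ⋯ Γ^{2k+1}`, for every
`j ∈ {1, …, 2k+2}` there is no invertible matrix `M` with `M Γ^0 M⁻¹ = Γ^0`,
`M Γ^j M⁻¹ = -Γ^j` and `M Γ^i M⁻¹ = Γ^i` for all `i ≠ j` (the Dirac mass term breaks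
the mirror reflection `R_j` in every odd spacetime dimension). -/
theorem mass_breaks_R_odd_d {n k : ℕ} (hn : 1 ≤ n)
    (Γ : ℕ → Matrix (Fin n) (Fin n) ℂ)
    (hΓ : LorentzClifford (2 * k + 3) Γ)
    (hlast : Γ (2 * k + 2) = Complex.I ^ (k + 1) • ((List.range (2 * k + 2)).map Γ).prod) :
    ∀ j, 1 ≤ j → j < 2 * k + 3 →
      ¬ ∃ M : Matrix (Fin n) (Fin n) ℂ, IsUnit M ∧
        M * Γ 0 * M⁻¹ = Γ 0 ∧
        M * Γ j * M⁻¹ = -(Γ j) ∧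
        ∀ i, 1 ≤ i → i < 2 * k + 3 → i ≠ j → M * Γ i * M⁻¹ = Γ i := by
  rintro j hj1 hj ⟨M, hM, h0, hneg, hfix⟩
  have : Nonempty (Fin n) := ⟨⟨0, hn⟩⟩
  have hdet : IsUnit M.det := (Matrix.isUnit_iff_isUnit_det M).1 hM
  have clear_inv : ∀ A B : Matrix (Fin n) (Fin n) ℂ, M * A * M⁻¹ = B → M * A = B * M := by
    intro A B hAB
    rw [← hAB, Matrix.nonsing_inv_mul_cancel_right _ _ hdet]
  have hcomm : ∀ i < 2 * k + 3,
      M * Γ i = (if i = j then (-1 : ℂ) else 1) • (Γ i * M) := by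
    intro i hi
    by_cases hij : i = j
    · subst hij
      rw [if_pos rfl, clear_inv _ _ hneg, neg_mul, neg_one_smul]
    · rw [if_neg hij, one_smul]
      rcases Nat.eq_zero_or_pos i with rfl | hi0
      · exact clear_inv _ _ h0
      · exact clear_inv _ _ (hfix i hi0 hi hij)
  have hprod : M * Γ (2 * k + 2) =
      (if j < 2 * k + 2 then (-1 : ℂ) else 1) • (Γ (2 * k + 2) * M) := by
    rw [hlast, mul_smul_comm, smul_mul_assoc,
      mul_prod_of_reflection Γ M j _ fun i hi => hcomm i (by omega), smul_comm]
  have hdirect := hcomm (2 * k + 2) (by omega)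
  -- Exactly one of the two signs is `-1`.
  have hskew : Γ (2 * k + 2) * M = -(Γ (2 * k + 2) * M) := by
    rcases Nat.lt_or_ge j (2 * k + 2) with hlt | hge
    · rw [if_pos hlt, neg_one_smul] at hprod
      rw [if_neg (by omega), one_smul] at hdirect
      exact hdirect.symm.trans hprod
    · rw [if_neg (by omega), one_smul] at hprod
      rw [if_pos (by omega), neg_one_smul] at hdirect
      exact hprod.symm.trans hdirect
  have hΓM : Γ (2 * k + 2) * M = 0 := by
    ext a b
    exact self_eq_neg.1 (congrFun (congrFun hskew a) b)
  have hΓ0 : Γ (2 * k + 2) = 0 := by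
    rw [← Matrix.mul_nonsing_inv_cancel_right M (Γ (2 * k + 2)) hdet, hΓM, zero_mul]
  have hsq := hΓ (2 * k + 2) (by omega) (2 * k + 2) (by omega)
  rw [if_pos rfl, if_neg (by omega), hΓ0, mul_zero, add_zero] at hsq
  exact smul_ne_zero (by norm_num) one_ne_zero hsq.symm
end
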